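/- arXiv:2101.09264 — 2 statements merged into one kernel-verified Lean document; each statement's English description precedes it below -/
import Mathlib

section
/- Let (η_k) be a sequence in ℝ^N such that Ψ(η_k) → +∞ as k → ∞ (as happens for the dual iterates of the accelerated dual gradient projection method when the primal QP is infeasible). Then ‖η_k‖_∞ → +∞ and 𝒜ᵀη_k / ‖η_k‖_∞ → 0 as k → ∞. -/
open Matrix Filter

lemma aux_quad {n : ℕ} (Q : Matrix (Fin n) (Fin n) ℝ) (hQ : Q.PosDef) (y : Fin n → ℝ) (i : Fin n) :
    0 ≤ y ⬝ᵥ Q⁻¹.mulVec y ∧ (y i) ^ 2 ≤ Q i i * (y ⬝ᵥ Q⁻¹.mulVec y) := by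
  have hpos : 0 < Q i i := hQ.diag_pos
  have h0 : 0 ≤ y ⬝ᵥ Q⁻¹.mulVec y := by
    have := hQ.inv.posSemidef.dotProduct_mulVec_nonneg y
    simpa using this
  refine ⟨h0, ?_⟩
  have hu : IsUnit Q.det := (Matrix.isUnit_iff_isUnit_det Q).mp hQ.isUnit
  have hsym : Qᵀ = Q := by
    have := hQ.isHermitian.eq
    simpa [Matrix.conjTranspose_eq_transpose_of_trivial] using this
  set w := Q⁻¹.mulVec y with hw
  have hy : Q.mulVec w = y := by
    rw [hw, Matrix.mulVec_mulVec, Matrix.mul_nonsing_inv _ hu, Matrix.one_mulVec]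
  have key : ∀ t : ℝ, 0 ≤ y ⬝ᵥ w - 2 * t * y i + t ^ 2 * Q i i := by
    intro t
    have h := hQ.posSemidef.dotProduct_mulVec_nonneg (w - t • Pi.single i 1)
    have e1 : w ⬝ᵥ Q.mulVec (Pi.single i 1) = y i := by
      rw [Matrix.dotProduct_mulVec, ← Matrix.mulVec_transpose, hsym, hy]
      simp
    have e2 : (Q.mulVec (Pi.single i 1)) i = Q i i := by simp
    have e3 : w ⬝ᵥ y = y ⬝ᵥ w := dotProduct_comm _ _
    simp only [star_trivial, Matrix.mulVec_sub, Matrix.mulVec_smul, hy, sub_dotProduct,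
      dotProduct_sub, smul_dotProduct, dotProduct_smul, single_one_dotProduct, e1, e2, e3,
      smul_eq_mul] at h
    nlinarith [h]
  have h := key (y i / Q i i)
  have e : y ⬝ᵥ w - 2 * (y i / Q i i) * y i + (y i / Q i i) ^ 2 * Q i i
      = y ⬝ᵥ w - (y i) ^ 2 / Q i i := by
    field_simp
    ring
  rw [e, sub_nonneg, div_le_iff₀ hpos] at h
  linarith

/-- If the dual function values Ψ(η_k) diverge to +∞ (as happens for the dual
iterates of GPAD when the primal QP is infeasible), then ‖η_k‖_∞ → +∞ and
𝒜ᵀη_k / ‖η_k‖_∞ → 0. -/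
theorem stmt_0 {n N : ℕ} (Q : Matrix (Fin n) (Fin n) ℝ) (hQ : Q.PosDef)
    (c : Fin n → ℝ) (A : Matrix (Fin N) (Fin n) ℝ) (b : Fin N → ℝ)
    (d : Fin N → ℝ) (hd : d = b + (A * Q⁻¹).mulVec c)
    (Ψ : (Fin N → ℝ) → ℝ)
    (hΨ : ∀ η, Ψ η = -(1/2) * (η ⬝ᵥ (A * Q⁻¹ * Aᵀ).mulVec η) - d ⬝ᵥ η
        - (1/2) * (c ⬝ᵥ Q⁻¹.mulVec c))
    (η : ℕ → Fin N → ℝ)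
    (hdiv : Tendsto (fun k => Ψ (η k)) atTop atTop) :
    Tendsto (fun k => ‖η k‖) atTop atTop ∧
    Tendsto (fun k => fun i => Aᵀ.mulVec (η k) i / ‖η k‖) atTop
      (nhds (0 : Fin n → ℝ)) := by
  set D : ℝ := ∑ j, |d j| with hD
  set C : ℝ := |(1/2) * (c ⬝ᵥ Q⁻¹.mulVec c)| with hC
  have hC0 : 0 ≤ C := abs_nonneg _
  have hD0 : 0 ≤ D := Finset.sum_nonneg fun _ _ => abs_nonneg _
  have hq : ∀ x : Fin N → ℝ, x ⬝ᵥ (A * Q⁻¹ * Aᵀ).mulVec x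
      = (Aᵀ.mulVec x) ⬝ᵥ Q⁻¹.mulVec (Aᵀ.mulVec x) := by
    intro x
    rw [← Matrix.mulVec_mulVec, ← Matrix.mulVec_mulVec, Matrix.dotProduct_mulVec,
      ← Matrix.mulVec_transpose]
  have hdx : ∀ x : Fin N → ℝ, - (d ⬝ᵥ x) ≤ D * ‖x‖ := by
    intro x
    rw [hD, Finset.sum_mul, dotProduct, ← Finset.sum_neg_distrib]
    refine Finset.sum_le_sum fun j _ => ?_
    calc -(d j * x j) ≤ |d j * x j| := neg_le_abs _
      _ = |d j| * |x j| := abs_mul _ _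
      _ ≤ |d j| * ‖x‖ := by
        have := norm_le_pi_norm x j
        rw [Real.norm_eq_abs] at this
        gcongr
  have hCc : -((1/2) * (c ⬝ᵥ Q⁻¹.mulVec c)) ≤ C := neg_le_abs _
  have hq0 : ∀ y : Fin n → ℝ, 0 ≤ y ⬝ᵥ Q⁻¹.mulVec y := by
    intro y
    have := hQ.inv.posSemidef.dotProduct_mulVec_nonneg y
    simpa using this
  have hnorm : Tendsto (fun k => ‖η k‖) atTop atTop := by
    have h1 : Tendsto (fun k => (Ψ (η k) - C) / (D + 1)) atTop atTop :=
      (tendsto_atTop_add_const_right _ (-C) hdiv).atTop_div_const (by linarith)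
    refine tendsto_atTop_mono (fun k => ?_) h1
    rw [div_le_iff₀ (by linarith), hΨ, hq]
    nlinarith [hdx (η k), hq0 (Aᵀ.mulVec (η k)), norm_nonneg (η k)]
  refine ⟨hnorm, ?_⟩
  rw [tendsto_pi_nhds]
  intro i
  have hinv : Tendsto (fun k => ‖η k‖⁻¹) atTop (nhds 0) := hnorm.inv_tendsto_atTop
  have hb : Tendsto (fun k => Q i i * (2 * (D * ‖η k‖⁻¹ + C * (‖η k‖⁻¹ * ‖η k‖⁻¹))))
      atTop (nhds 0) := by
    have := (((hinv.const_mul D).add ((hinv.mul hinv).const_mul C)).const_mul 2).const_mul (Q i i)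
    simpa using this
  have hsq : Tendsto (fun k => (Aᵀ.mulVec (η k) i / ‖η k‖) ^ 2) atTop (nhds 0) := by
    refine tendsto_of_tendsto_of_tendsto_of_le_of_le' tendsto_const_nhds hb
      (Eventually.of_forall fun k => sq_nonneg _) ?_
    filter_upwards [hdiv.eventually_ge_atTop 0, hnorm.eventually_gt_atTop 0] with k hk hpos
    obtain ⟨-, h2⟩ := aux_quad Q hQ (Aᵀ.mulVec (η k)) i
    have hQi : 0 < Q i i := hQ.diag_pos
    rw [hΨ, hq] at hk
    have h3 : (Aᵀ.mulVec (η k)) ⬝ᵥ Q⁻¹.mulVec (Aᵀ.mulVec (η k)) ≤ 2 * (D * ‖η k‖ + C) := by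
      linarith [hdx (η k)]
    have h4 := h2.trans (mul_le_mul_of_nonneg_left h3 hQi.le)
    rw [div_pow, div_le_iff₀ (by positivity)]
    refine h4.trans (le_of_eq ?_)
    field_simp
  have := hsq.sqrt
  simp only [Real.sqrt_sq_eq_abs, Real.sqrt_zero] at this
  exact (tendsto_zero_iff_abs_tendsto_zero _).mpr this
end

section
/- Let z* ∈ ℝⁿ and λ* ∈ ℝ^{n_λ} satisfy the KKT stationarity condition Qz* + c + 𝒜ᵀλ* = 0, and let j ∈ {1,…,n_λ} be an index with λ*_j = 0 (an inactive inequality constraint at z*) such that H_{jj} := 𝒜_j Q⁻¹ 𝒜_jᵀ ≠ 0. Define λ̄ ∈ ℝ^{n_λ} by λ̄_j = (𝒜_j z* − b_j)/H_{jj} and λ̄_i = λ*_i for all i ≠ j, and define z̄ = −Q⁻¹𝒜ᵀλ̄ − Q⁻¹c. Then z̄ satisfies the equality constraint 𝒜_j z̄ = b_j. -/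
open Matrix

/-- Warm-start lemma: if (z*, λ*) satisfies KKT stationarity, λ*_j = 0 and
H_jj = 𝒜_j Q⁻¹ 𝒜_jᵀ ≠ 0, then the dual vector λ̄ obtained by setting
λ̄_j = (𝒜_j z* − b_j)/H_jj and the corresponding primal vector
z̄ = −Q⁻¹𝒜ᵀλ̄ − Q⁻¹c satisfy 𝒜_j z̄ = b_j. -/
theorem stmt_3 {n nl : ℕ} (Q : Matrix (Fin n) (Fin n) ℝ) (hQ : Q.PosDef)
    (c : Fin n → ℝ) (A : Matrix (Fin nl) (Fin n) ℝ) (b : Fin nl → ℝ)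
    (zstar : Fin n → ℝ) (lstar : Fin nl → ℝ)
    (hKKT : Q.mulVec zstar + c + Aᵀ.mulVec lstar = 0)
    (j : Fin nl) (hjl : lstar j = 0)
    (Hjj : ℝ) (hHjj : Hjj = A j ⬝ᵥ Q⁻¹.mulVec (A j)) (hHjj0 : Hjj ≠ 0)
    (lbar : Fin nl → ℝ)
    (hlbarj : lbar j = (A.mulVec zstar j - b j) / Hjj)
    (hlbari : ∀ i, i ≠ j → lbar i = lstar i)
    (zbar : Fin n → ℝ)
    (hzbar : zbar = -(Q⁻¹.mulVec (Aᵀ.mulVec lbar)) - Q⁻¹.mulVec c) :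
    A.mulVec zbar j = b j := by
  have hdet : IsUnit Q.det := isUnit_iff_ne_zero.mpr hQ.det_pos.ne'
  have hl : lbar = lstar + Pi.single j (lbar j) := by
    funext i
    by_cases h : i = j
    · subst h; simp [hjl]
    · simp [h, hlbari i h]
  have hA : Aᵀ.mulVec lbar = Aᵀ.mulVec lstar + lbar j • A j := by
    conv_lhs => rw [hl]
    rw [Matrix.mulVec_add]
    congr 1
    funext k
    simp [mul_comm]
  have hz : Q⁻¹.mulVec (Q.mulVec zstar) = zstar := by
    rw [Matrix.mulVec_mulVec, Matrix.nonsing_inv_mul _ hdet, Matrix.one_mulVec]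
  have h0 : zstar + Q⁻¹.mulVec c + Q⁻¹.mulVec (Aᵀ.mulVec lstar) = 0 := by
    have := congrArg (fun v => Q⁻¹.mulVec v) hKKT
    simpa only [Matrix.mulVec_add, hz, Matrix.mulVec_zero] using this
  have hzb : zbar = zstar - lbar j • Q⁻¹.mulVec (A j) := by
    rw [hzbar, hA, Matrix.mulVec_add, Matrix.mulVec_smul]
    funext k
    have := congrFun h0 k
    simp only [Pi.add_apply, Pi.sub_apply, Pi.neg_apply, Pi.zero_apply] at this ⊢
    linarith
  have hfin : A.mulVec zbar j = A.mulVec zstar j - lbar j * Hjj := by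
    rw [hzb, Matrix.mulVec_sub, Matrix.mulVec_smul, hHjj]
    rfl
  rw [hfin, hlbarj, div_mul_cancel₀ _ hHjj0]
  ring
end
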